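/- The endomorphism 𝒞_{m,n} = ℒ_m + ℛ_n − 𝒜_{m,n} + Nn of V^{m,n} coincides with the action on V^{m,n} of the Casimir element (1/2)(Eⁱ_j Eʲ_i + N Eⁱ_i) of U(𝔤𝔩_N), where 𝔤𝔩_N acts on V^{m,n} as a derivation via E^i_j(e_k) = −e_j δ^i_k and E^i_j(e^k) = δ_j^k e^i; in particular 𝒞_{m,n} lies in the center of the centralizer algebra C_{m,n}(N). -/

import Mathlib

open scoped BigOperators

noncomputable section

/-- Mixed tensors of valence (m,n) on an N-dimensional space, given by components. -/
abbrev Tens (N m n : ℕ) := (Fin m → Fin N) → (Fin n → Fin N) → ℂ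

namespace Mixed

variable (N : ℕ)

/-- Permutation of the contravariant (V) factors. -/
def permU (m n : ℕ) (p : Equiv.Perm (Fin m)) : Module.End ℂ (Tens N m n) where
  toFun t := fun i j => t (i ∘ p) j
  map_add' t s := rfl
  map_smul' c t := rfl

/-- Permutation of the covariant (V*) factors. -/
def permD (m n : ℕ) (q : Equiv.Perm (Fin n)) : Module.End ℂ (Tens N m n) where
  toFun t := fun i j => t i (j ∘ q)
  map_add' t s := rfl
  map_smul' c t := rfl

/-- The contraction map `tr_{ab'}` (the result, a tensor of valence (m−1,n−1), is
recorded as a function not depending on the slots a, b). -/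
def ctr (m n : ℕ) (a : Fin m) (b : Fin n) : Tens N m n →ₗ[ℂ] Tens N m n where
  toFun t := fun i j => ∑ k : Fin N,
    t (Function.update i a k) (Function.update j b k)
  map_add' t s := by funext i j; simp [Finset.sum_add_distrib]
  map_smul' c t := by funext i j; simp [Finset.mul_sum]

/-- The contraction-insertion endomorphism `τ_{ab'} = tr⁺_{ab'} ∘ tr_{ab'}`. -/
def tauC (m n : ℕ) (a : Fin m) (b : Fin n) : Module.End ℂ (Tens N m n) where
  toFun t := fun i j =>
    if i a = j b then
      ∑ k : Fin N, t (Function.update i a k) (Function.update j b k)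
    else 0
  map_add' t s := by
    funext i j; by_cases h : i a = j b <;> simp [h, Finset.sum_add_distrib]
  map_smul' c t := by
    funext i j; by_cases h : i a = j b <;> simp [h, Finset.mul_sum]

/-- `𝒜_{m,n} = ∑_{a,b'} τ_{ab'}`. -/
def A (m n : ℕ) : Module.End ℂ (Tens N m n) :=
  ∑ a : Fin m, ∑ b : Fin n, tauC N m n a b

/-- The traceless subspace: common kernel of all contractions. -/
def traceless0 (m n : ℕ) : Submodule ℂ (Tens N m n) :=
  ⨅ a : Fin m, ⨅ b : Fin n, LinearMap.ker (ctr N m n a b)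

/-- `ℒ_m`: the sum of the transpositions of the V-factors. -/
def LOp (m n : ℕ) : Module.End ℂ (Tens N m n) :=
  ∑ x ∈ Finset.univ.filter (fun x : Fin m × Fin m => x.1 < x.2),
    permU N m n (Equiv.swap x.1 x.2)

/-- `ℛ_n`: the sum of the transpositions of the V*-factors. -/
def ROp (m n : ℕ) : Module.End ℂ (Tens N m n) :=
  ∑ x ∈ Finset.univ.filter (fun x : Fin n × Fin n => x.1 < x.2),
    permD N m n (Equiv.swap x.1 x.2)

/-- The (diagonal) action of GL(N) on mixed tensors: the contragredient action on
the covariant indices. -/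
def glAct (m n : ℕ) (g : GL (Fin N) ℂ) : Module.End ℂ (Tens N m n) where
  toFun t := fun i j => ∑ i' : Fin m → Fin N, ∑ j' : Fin n → Fin N,
    ((∏ a : Fin m, (g : Matrix (Fin N) (Fin N) ℂ) (i a) (i' a)) *
      ∏ b : Fin n, ((g⁻¹ : GL (Fin N) ℂ) : Matrix (Fin N) (Fin N) ℂ) (j' b) (j b)) *
        t i' j'
  map_add' t s := by
    funext i j
    simp only [Pi.add_apply, mul_add, Finset.sum_add_distrib]
  map_smul' c t := by
    funext i j
    simp only [Pi.smul_apply, smul_eq_mul, RingHom.id_apply, Finset.mul_sum]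
    refine Finset.sum_congr rfl fun i' _ => Finset.sum_congr rfl fun j' _ => by ring

/-- The centraliser algebra `C_{m,n}(N) = End_{GL(N)}(V^{m,n})`. -/
def Cent (m n : ℕ) : Subalgebra ℂ (Module.End ℂ (Tens N m n)) :=
  Subalgebra.centralizer ℂ (Set.range (glAct N m n))

end Mixed

namespace Mixed

/-- The action of the matrix unit E^i_j ∈ 𝔤𝔩_N on the s-th contravariant slot,
for the convention E^i_j(e_k) = −e_j δ^i_k. -/
def EactU (N m n : ℕ) (i j : Fin N) (s : Fin m) : Module.End ℂ (Tens N m n) where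
  toFun t := fun a b => if a s = j then -t (Function.update a s i) b else 0
  map_add' t u := by funext a b; by_cases h : a s = j <;> simp [h]; ring
  map_smul' c t := by funext a b; by_cases h : a s = j <;> simp [h]

/-- The action of the matrix unit E^i_j ∈ 𝔤𝔩_N on the s-th covariant slot,
for the convention E^i_j(e^k) = δ_j^k e^i. -/
def EactD (N m n : ℕ) (i j : Fin N) (s : Fin n) : Module.End ℂ (Tens N m n) where
  toFun t := fun a b => if b s = i then t a (Function.update b s j) else 0
  map_add' t u := by funext a b; by_cases h : b s = i <;> simp [h]
  map_smul' c t := by funext a b; by_cases h : b s = i <;> simp [h]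

/-- The derivation action of E^i_j ∈ 𝔤𝔩_N on the mixed tensor product V^{m,n}. -/
def Eact (N m n : ℕ) (i j : Fin N) : Module.End ℂ (Tens N m n) :=
  (∑ s : Fin m, EactU N m n i j s) + ∑ s : Fin n, EactD N m n i j s

/-- The action on V^{m,n} of the Casimir element (1/2)(Eⁱ_j Eʲ_i + N Eⁱ_i)
of U(𝔤𝔩_N). -/
def casimir (N m n : ℕ) : Module.End ℂ (Tens N m n) :=
  (2 : ℂ)⁻¹ • ((∑ i : Fin N, ∑ j : Fin N, Eact N m n i j * Eact N m n j i)
    + (N : ℂ) • ∑ i : Fin N, Eact N m n i i)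

end Mixed

namespace Mixed

lemma sum_sym {M : Type*} [AddCommMonoid M] {m : ℕ} (F : Fin m → Fin m → M) :
    ∑ s, ∑ r, F s r = ∑ s, F s s +
      ∑ x ∈ Finset.univ.filter (fun x : Fin m × Fin m => x.1 < x.2), (F x.1 x.2 + F x.2 x.1) := by
  have h1 : ∀ s r, F s r = (if s = r then F s r else 0) + ((if s < r then F s r else 0)
      + (if r < s then F s r else 0)) := by
    intro s r
    rcases lt_trichotomy s r with h | h | h
    · simp [h, h.ne, not_lt.2 h.le]
    · simp [h]
    · simp [h, h.ne', not_lt.2 h.le]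
  have h2 : ∑ s, ∑ r, (if r < s then F s r else 0) = ∑ s, ∑ r, (if s < r then F r s else 0) :=
    Finset.sum_comm
  rw [Finset.sum_congr rfl fun s _ => Finset.sum_congr rfl fun r _ => h1 s r]
  simp only [Finset.sum_add_distrib, h2]
  simp [Finset.sum_filter, Fintype.sum_prod_type]

variable (N m n : ℕ)

lemma comp_swap {k N : ℕ} (a : Fin k → Fin N) (s r : Fin k) :
    a ∘ Equiv.swap s r = Function.update (Function.update a s (a r)) r (a s) := by
  funext x
  simp only [Function.comp, Function.update_apply, Equiv.swap_apply_def]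
  split_ifs <;> simp_all

lemma UU (s r : Fin m) : ∑ i, ∑ j, EactU N m n i j s * EactU N m n j i r =
    if s = r then (N : ℂ) • (1 : Module.End ℂ (Tens N m n)) else permU N m n (Equiv.swap s r) := by
  refine LinearMap.ext fun t => funext fun a => funext fun b => ?_
  split_ifs with h
  · subst h
    simp [EactU, LinearMap.sum_apply, Finset.sum_apply]
  · have h' : r ≠ s := fun e => h e.symm
    simp [EactU, permU, LinearMap.sum_apply, Finset.sum_apply, comp_swap, Function.update_of_ne h']

lemma DD (s r : Fin n) : ∑ i, ∑ j, EactD N m n i j s * EactD N m n j i r =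
    if s = r then (N : ℂ) • (1 : Module.End ℂ (Tens N m n)) else permD N m n (Equiv.swap s r) := by
  refine LinearMap.ext fun t => funext fun a => funext fun b => ?_
  split_ifs with h
  · subst h
    simp [EactD, LinearMap.sum_apply, Finset.sum_apply]
  · have h' : r ≠ s := fun e => h e.symm
    simp [EactD, permD, LinearMap.sum_apply, Finset.sum_apply, comp_swap, Function.update_of_ne h']

lemma UD (s : Fin m) (r : Fin n) : ∑ i, ∑ j, EactU N m n i j s * EactD N m n j i r =
    - tauC N m n s r := by
  refine LinearMap.ext fun t => funext fun a => funext fun b => ?_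
  by_cases h : a s = b r
  · simp [EactU, EactD, tauC, LinearMap.sum_apply, Finset.sum_apply, h]
  · have h' : b r ≠ a s := fun e => h e.symm
    simp [EactU, EactD, tauC, LinearMap.sum_apply, Finset.sum_apply, h, h']

lemma DU (s : Fin m) (r : Fin n) : ∑ i, ∑ j, EactD N m n i j r * EactU N m n j i s =
    - tauC N m n s r := by
  refine LinearMap.ext fun t => funext fun a => funext fun b => ?_
  by_cases h : a s = b r
  · simp [EactU, EactD, tauC, LinearMap.sum_apply, Finset.sum_apply, h, Finset.sum_ite_irrel]
  · have h' : b r ≠ a s := fun e => h e.symm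
    simp [EactU, EactD, tauC, LinearMap.sum_apply, Finset.sum_apply, h, Finset.sum_ite_irrel]

lemma Udiag (s : Fin m) : ∑ i, EactU N m n i i s = -1 := by
  refine LinearMap.ext fun t => funext fun a => funext fun b => ?_
  simp [EactU, LinearMap.sum_apply, Finset.sum_apply]

lemma Ddiag (s : Fin n) : ∑ i, EactD N m n i i s = 1 := by
  refine LinearMap.ext fun t => funext fun a => funext fun b => ?_
  simp [EactD, LinearMap.sum_apply, Finset.sum_apply]

lemma swap4 {M : Type*} [AddCommMonoid M] {α β γ δ : Type*} [Fintype α] [Fintype β] [Fintype γ]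
    [Fintype δ] (F : α → β → γ → δ → M) :
    ∑ a, ∑ b, ∑ c, ∑ d, F a b c d = ∑ c, ∑ d, ∑ a, ∑ b, F a b c d := by
  calc ∑ a, ∑ b, ∑ c, ∑ d, F a b c d = ∑ a, ∑ c, ∑ b, ∑ d, F a b c d :=
        Finset.sum_congr rfl fun a _ => Finset.sum_comm
    _ = ∑ c, ∑ a, ∑ b, ∑ d, F a b c d := Finset.sum_comm
    _ = ∑ c, ∑ a, ∑ d, ∑ b, F a b c d :=
        Finset.sum_congr rfl fun c _ => Finset.sum_congr rfl fun a _ => Finset.sum_comm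
    _ = ∑ c, ∑ d, ∑ a, ∑ b, F a b c d := Finset.sum_congr rfl fun c _ => Finset.sum_comm

lemma formula : casimir N m n = LOp N m n + ROp N m n - A N m n
        + ((N * n : ℕ) : ℂ) • (1 : Module.End ℂ (Tens N m n)) := by
  have h1 : ∑ i, ∑ j, Eact N m n i j * Eact N m n j i =
      (∑ s, ∑ r, ∑ i, ∑ j, EactU N m n i j s * EactU N m n j i r)
      + (∑ s, ∑ r, ∑ i, ∑ j, EactU N m n i j s * EactD N m n j i r)
      + (∑ r, ∑ s, ∑ i, ∑ j, EactD N m n i j r * EactU N m n j i s)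
      + (∑ s, ∑ r, ∑ i, ∑ j, EactD N m n i j s * EactD N m n j i r) := by
    rw [swap4, swap4 (fun s r i j => EactU N m n i j s * EactD N m n j i r),
      swap4 (fun r s i j => EactD N m n i j r * EactU N m n j i s),
      swap4 (fun s r i j => EactD N m n i j s * EactD N m n j i r)]
    simp only [← Finset.sum_add_distrib, Eact]
    refine Finset.sum_congr rfl fun i _ => Finset.sum_congr rfl fun j _ => ?_
    rw [add_mul, mul_add, mul_add]
    simp only [Finset.sum_mul_sum, Finset.sum_add_distrib, add_assoc]
  have h2 : ∑ i, Eact N m n i i = ((n : ℂ) - m) • (1 : Module.End ℂ (Tens N m n)) := by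
    simp only [Eact, Finset.sum_add_distrib]
    rw [Finset.sum_comm, Finset.sum_comm (f := fun i s => EactD N m n i i s)]
    simp only [Udiag, Ddiag]
    simp only [Finset.sum_const, Finset.card_univ, Fintype.card_fin]
    module
  have h3 : ∑ s, ∑ r, ∑ i, ∑ j, EactU N m n i j s * EactU N m n j i r =
      (m : ℂ) • (N : ℂ) • (1 : Module.End ℂ (Tens N m n)) + (2 : ℂ) • LOp N m n := by
    simp only [UU]
    rw [sum_sym]
    congr 1
    · simp [Nat.cast_smul_eq_nsmul]
    · rw [LOp, Finset.smul_sum]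
      refine Finset.sum_congr rfl fun x hx => ?_
      have := (Finset.mem_filter.1 hx).2
      rw [if_neg this.ne, if_neg this.ne', Equiv.swap_comm, two_smul]
  have h4 : ∑ s, ∑ r, ∑ i, ∑ j, EactD N m n i j s * EactD N m n j i r =
      (n : ℂ) • (N : ℂ) • (1 : Module.End ℂ (Tens N m n)) + (2 : ℂ) • ROp N m n := by
    simp only [DD]
    rw [sum_sym]
    congr 1
    · simp [Nat.cast_smul_eq_nsmul]
    · rw [ROp, Finset.smul_sum]
      refine Finset.sum_congr rfl fun x hx => ?_
      have := (Finset.mem_filter.1 hx).2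
      rw [if_neg this.ne, if_neg this.ne', Equiv.swap_comm, two_smul]
  have h5 : ∑ s, ∑ r, ∑ i, ∑ j, EactU N m n i j s * EactD N m n j i r = - A N m n := by
    simp only [UD, A, Finset.sum_neg_distrib]
  have h6 : ∑ r, ∑ s, ∑ i, ∑ j, EactD N m n i j r * EactU N m n j i s = - A N m n := by
    simp only [DU, A, Finset.sum_neg_distrib]
    rw [Finset.sum_comm]
  rw [casimir, h1, h2, h3, h4, h5, h6]
  push_cast
  module

/-! commutation with the group -/

lemma permU_comm (p : Equiv.Perm (Fin m)) (g : GL (Fin N) ℂ) :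
    glAct N m n g * permU N m n p = permU N m n p * glAct N m n g := by
  refine LinearMap.ext fun t => funext fun a => funext fun b => ?_
  simp only [Module.End.mul_apply, glAct, permU, LinearMap.coe_mk, AddHom.coe_mk]
  refine Fintype.sum_equiv (Equiv.arrowCongr p.symm (Equiv.refl _)) _ _ fun x => ?_
  refine Finset.sum_congr rfl fun y _ => ?_
  have : (Equiv.arrowCongr p.symm (Equiv.refl (Fin N))) x = x ∘ p := by ext; simp
  rw [this]
  congr 2
  exact (Equiv.prod_comp p (fun s => (g : Matrix (Fin N) (Fin N) ℂ) (a s) (x s))).symm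

lemma permD_comm (p : Equiv.Perm (Fin n)) (g : GL (Fin N) ℂ) :
    glAct N m n g * permD N m n p = permD N m n p * glAct N m n g := by
  refine LinearMap.ext fun t => funext fun a => funext fun b => ?_
  simp only [Module.End.mul_apply, glAct, permD, LinearMap.coe_mk, AddHom.coe_mk]
  refine Finset.sum_congr rfl fun x _ => ?_
  refine Fintype.sum_equiv (Equiv.arrowCongr p.symm (Equiv.refl _)) _ _ fun y => ?_
  have : (Equiv.arrowCongr p.symm (Equiv.refl (Fin N))) y = y ∘ p := by ext; simp
  rw [this]
  congr 2
  exact (Equiv.prod_comp p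
    (fun s => ((g⁻¹ : GL (Fin N) ℂ) : Matrix (Fin N) (Fin N) ℂ) (y s) (b s))).symm

lemma invol {k N : ℕ} (s : Fin k) (Φ : (Fin k → Fin N) → Fin N → ℂ) :
    ∑ x, ∑ c, Φ x c = ∑ x, ∑ c, Φ (Function.update x s c) (x s) := by
  simp only [← Fintype.sum_prod_type']
  let e : ((Fin k → Fin N) × Fin N) ≃ ((Fin k → Fin N) × Fin N) :=
    { toFun := fun z => (Function.update z.1 s z.2, z.1 s)
      invFun := fun z => (Function.update z.1 s z.2, z.1 s)
      left_inv := fun z => by simp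
      right_inv := fun z => by simp }
  exact (Equiv.sum_comp e (fun z => Φ z.1 z.2)).symm

lemma prod_update_left {k N : ℕ} (s : Fin k) (M : Fin N → Fin N → ℂ) (x y : Fin k → Fin N)
    (c : Fin N) : ∏ r, M (Function.update x s c r) (y r) =
      M c (y s) * ∏ r ∈ Finset.univ.erase s, M (x r) (y r) := by
  rw [← Finset.mul_prod_erase _ _ (Finset.mem_univ s)]
  congr 1
  · simp
  · refine Finset.prod_congr rfl fun r hr => ?_
    rw [Function.update_of_ne (Finset.ne_of_mem_erase hr)]

lemma tau_comm (s : Fin m) (r : Fin n) (g : GL (Fin N) ℂ) :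
    glAct N m n g * tauC N m n s r = tauC N m n s r * glAct N m n g := by
  refine LinearMap.ext fun t => funext fun a => funext fun b => ?_
  set G : Fin N → Fin N → ℂ := (g : Matrix (Fin N) (Fin N) ℂ) with hG
  set H : Fin N → Fin N → ℂ := ((g⁻¹ : GL (Fin N) ℂ) : Matrix (Fin N) (Fin N) ℂ) with hH
  have hGH : ∀ x y, ∑ k, G x k * H k y = if x = y then 1 else 0 := by
    intro x y
    have : ((g : Matrix (Fin N) (Fin N) ℂ) * ((g⁻¹ : GL (Fin N) ℂ) : Matrix (Fin N) (Fin N) ℂ)) x y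
      = (1 : Matrix (Fin N) (Fin N) ℂ) x y := by
      rw [← Units.val_mul, mul_inv_cancel, Units.val_one]
    rwa [Matrix.mul_apply, Matrix.one_apply] at this
  have hHG : ∀ x y, ∑ k, H x k * G k y = if x = y then 1 else 0 := by
    intro x y
    have : (((g⁻¹ : GL (Fin N) ℂ) : Matrix (Fin N) (Fin N) ℂ) * (g : Matrix (Fin N) (Fin N) ℂ)) x y
      = (1 : Matrix (Fin N) (Fin N) ℂ) x y := by
      rw [← Units.val_mul, inv_mul_cancel, Units.val_one]
    rwa [Matrix.mul_apply, Matrix.one_apply] at this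
  let P : (Fin m → Fin N) → ℂ := fun x => ∏ q ∈ Finset.univ.erase s, G (a q) (x q)
  let Q : (Fin n → Fin N) → ℂ := fun y => ∏ q ∈ Finset.univ.erase r, H (y q) (b q)
  have hP0 : ∀ x, ∏ q, G (a q) (x q) = G (a s) (x s) * P x := fun x =>
    (Finset.mul_prod_erase _ _ (Finset.mem_univ s)).symm
  have hQ0 : ∀ y, ∏ q, H (y q) (b q) = H (y r) (b r) * Q y := fun y =>
    (Finset.mul_prod_erase _ _ (Finset.mem_univ r)).symm
  have hPu : ∀ x c, P (Function.update x s c) = P x := fun x c =>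
    Finset.prod_congr rfl fun q hq => by rw [Function.update_of_ne (Finset.ne_of_mem_erase hq)]
  have hQu : ∀ x c, Q (Function.update x r c) = Q x := fun x c =>
    Finset.prod_congr rfl fun q hq => by rw [Function.update_of_ne (Finset.ne_of_mem_erase hq)]
  have lhs : (glAct N m n g * tauC N m n s r) t a b =
      ∑ x, ∑ y, (if a s = b r then 1 else 0) * (if y r = x s then 1 else 0) * (P x * Q y * t x y) := by
    calc (glAct N m n g * tauC N m n s r) t a b
        = ∑ x, ∑ y, ((∏ q, G (a q) (x q)) * ∏ q, H (y q) (b q)) *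
            (if x s = y r then ∑ k, t (Function.update x s k) (Function.update y r k) else 0) := rfl
      _ = ∑ x, ∑ y, ∑ l, ∑ k, G (a s) (x s) * H (y r) (b r) * (if x s = y r then 1 else 0) *
            (if k = l then 1 else 0) * (P x * Q y) *
            t (Function.update x s k) (Function.update y r l) := by
          refine Finset.sum_congr rfl fun x _ => Finset.sum_congr rfl fun y _ => ?_
          rw [hP0, hQ0]
          simp only [mul_ite, ite_mul, mul_one, mul_zero, zero_mul, Finset.sum_ite_eq',
            Finset.sum_ite_eq, Finset.mem_univ, if_true]
          split_ifs
          · rw [Finset.mul_sum]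
            exact Finset.sum_congr rfl fun k _ => by ring
          · simp
      _ = ∑ x, ∑ y, ∑ l, ∑ k, G (a s) (x s) * H l (b r) * (if x s = l then 1 else 0) *
            (if k = y r then 1 else 0) * (P x * Q y) *
            t (Function.update x s k) y := by
          refine Finset.sum_congr rfl fun x _ => ?_
          rw [invol r]
          simp [hQu]
      _ = ∑ y, ∑ l, ∑ x, ∑ k, G (a s) (x s) * H l (b r) * (if x s = l then 1 else 0) *
            (if k = y r then 1 else 0) * (P x * Q y) *
            t (Function.update x s k) y := by
          rw [Finset.sum_comm]
          exact Finset.sum_congr rfl fun y _ => Finset.sum_comm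
      _ = ∑ y, ∑ l, ∑ x, ∑ k, G (a s) k * H l (b r) * (if k = l then 1 else 0) *
            (if x s = y r then 1 else 0) * (P x * Q y) *
            t x y := by
          refine Finset.sum_congr rfl fun y _ => Finset.sum_congr rfl fun l _ => ?_
          rw [invol s]
          simp [hPu]
      _ = ∑ y, ∑ x, ∑ l, ∑ k, G (a s) k * H l (b r) * (if k = l then 1 else 0) *
            (if x s = y r then 1 else 0) * (P x * Q y) *
            t x y := Finset.sum_congr rfl fun y _ => Finset.sum_comm
      _ = _ := by
          rw [Finset.sum_comm]
          refine Finset.sum_congr rfl fun x _ => Finset.sum_congr rfl fun y _ => ?_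
          rw [← hGH (a s) (b r), Finset.sum_mul, Finset.sum_mul]
          refine Finset.sum_congr rfl fun l _ => ?_
          rw [Finset.sum_eq_single l]
          · simp only [if_true, eq_comm (a := x s)]; ring
          · intro k _ hk; simp [hk]
          · simp
  have rhs : (tauC N m n s r * glAct N m n g) t a b =
      ∑ x, ∑ y, (if a s = b r then 1 else 0) * (if y r = x s then 1 else 0) * (P x * Q y * t x y) := by
    calc (tauC N m n s r * glAct N m n g) t a b
        = if a s = b r then ∑ k, ∑ x, ∑ y, ((∏ q, G (Function.update a s k q) (x q)) *
            ∏ q, H (y q) (Function.update b r k q)) * t x y else 0 := rfl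
      _ = _ := by
          split_ifs with h
          · rw [Finset.sum_comm]
            refine Finset.sum_congr rfl fun x _ => ?_
            rw [Finset.sum_comm]
            refine Finset.sum_congr rfl fun y _ => ?_
            rw [← hHG, one_mul, Finset.sum_mul]
            refine Finset.sum_congr rfl fun k _ => ?_
            rw [prod_update_left, prod_update_left (M := fun u v => H v u)]
            simp only [P, Q]
            ring
          · simp
  rw [lhs, rhs]

lemma mem_cent : casimir N m n ∈ Cent N m n := by
  rw [Cent, Subalgebra.mem_centralizer_iff]
  rintro _ ⟨g, rfl⟩
  change Commute (glAct N m n g) (casimir N m n)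
  rw [formula]
  refine (((Commute.sum_right _ _ _ fun x _ => permU_comm N m n _ g).add_right
    (Commute.sum_right _ _ _ fun x _ => permD_comm N m n _ g)).sub_right
    (Commute.sum_right _ _ _ fun x _ => Commute.sum_right _ _ _ fun y _ =>
      tau_comm N m n _ _ g)).add_right ((Commute.one_right _).smul_right _)

/-! infinitesimal action -/

lemma exists_curve (i j : Fin N) : ∃ γ : ℂ → GL (Fin N) ℂ,
    (γ 0 = 1) ∧
    (∀ x y, HasDerivAt (fun τ => (γ τ : Matrix (Fin N) (Fin N) ℂ) x y)
      (-((if x = j then 1 else 0) * (if y = i then 1 else 0))) 0) ∧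
    (∀ x y, HasDerivAt (fun τ => (((γ τ)⁻¹ : GL (Fin N) ℂ) : Matrix (Fin N) (Fin N) ℂ) x y)
      ((if y = i then 1 else 0) * (if x = j then 1 else 0)) 0) := by
  obtain ⟨c, hc0, hc, hcd⟩ : ∃ c : ℂ → ℂ, c 0 = 0 ∧
      (∀ τ, c τ + c (-τ) + c τ * c (-τ) * (if i = j then 1 else 0) = 0) ∧
      HasDerivAt c (-1) 0 := by
    by_cases h : i = j
    · refine ⟨fun τ => Complex.exp (-τ) - 1, by simp, fun τ => ?_, ?_⟩
      · have : Complex.exp (-τ) * Complex.exp τ = 1 := by rw [← Complex.exp_add]; simp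
        simp only [h, if_true, neg_neg]
        linear_combination this
      · simpa using ((hasDerivAt_id (0 : ℂ)).neg.cexp).sub_const 1
    · refine ⟨fun τ => -τ, by simp, fun τ => by simp [h], ?_⟩
      exact hasDerivAt_neg (0 : ℂ)
  have hcd' : HasDerivAt (fun τ => c (-τ)) 1 0 := by
    have h1 : HasDerivAt c (-1) (-(0 : ℂ)) := by simpa using hcd
    exact (h1.comp (0 : ℂ) (hasDerivAt_neg (0 : ℂ))).congr_deriv (by ring)
  let E : ℂ → Matrix (Fin N) (Fin N) ℂ := fun z => 1 + Matrix.single j i z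
  have hE : ∀ τ, E (c τ) * E (c (-τ)) = 1 := by
    intro τ
    have := hc τ
    simp only [E, mul_add, add_mul, one_mul, mul_one, add_assoc]
    rw [add_eq_left]
    by_cases h : i = j
    · subst h
      rw [Matrix.single_mul_single_same, ← Matrix.single_add, ← Matrix.single_add]
      simp only [if_true, mul_one] at this
      rw [show c τ + (c (-τ) + c τ * c (-τ)) = 0 by linear_combination this]
      simp
    · rw [Matrix.single_mul_single_of_ne _ _ _ _ h, ← Matrix.single_zero j i,
        ← Matrix.single_add, ← Matrix.single_add]
      simp only [if_neg h] at this
      rw [show c τ + (c (-τ) + 0) = 0 by linear_combination this]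
  have hE' : ∀ τ, E (c (-τ)) * E (c τ) = 1 := fun τ => by simpa using hE (-τ)
  have key : ∀ (d : ℂ → ℂ) (d' : ℂ), HasDerivAt d d' 0 → ∀ x y,
      HasDerivAt (fun τ => E (d τ) x y) (d' * (if x = j then 1 else 0) * (if y = i then 1 else 0)) 0 := by
    intro d d' hd x y
    have : (fun τ => E (d τ) x y) = fun τ => (1 : Matrix (Fin N) (Fin N) ℂ) x y +
        d τ * ((if x = j then 1 else 0) * (if y = i then 1 else 0)) := by
      funext τ
      simp only [E, Matrix.add_apply, Matrix.single_apply]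
      congr 1
      by_cases h1 : x = j <;> by_cases h2 : y = i <;> simp [h1, h2, eq_comm] <;> grind
    rw [this, mul_assoc]
    exact (hd.mul_const _).const_add _
  refine ⟨fun τ => ⟨E (c τ), E (c (-τ)), hE τ, hE' τ⟩, ?_, fun x y => ?_, fun x y => ?_⟩
  · ext x y
    simp [E, hc0]
  · exact (key c (-1) hcd x y).congr_deriv (by ring)
  · exact (key _ 1 hcd' x y).congr_deriv (by ring)

lemma delta_prod {k N : ℕ} (a x : Fin k → Fin N) :
    (∏ q, (1 : Matrix (Fin N) (Fin N) ℂ) (a q) (x q)) = if x = a then 1 else 0 := by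
  simp only [Matrix.one_apply, Finset.prod_ite_zero, Finset.prod_const_one]
  congr 1
  simp [funext_iff, eq_comm]

lemma delta_erase {k N : ℕ} (s : Fin k) (a x : Fin k → Fin N) (i : Fin N) :
    (∏ q ∈ Finset.univ.erase s, (1 : Matrix (Fin N) (Fin N) ℂ) (a q) (x q)) *
      (if x s = i then 1 else 0) = if x = Function.update a s i then 1 else 0 := by
  rw [← delta_prod, ← Finset.mul_prod_erase _ _ (Finset.mem_univ s), mul_comm]
  congr 1
  · simp [Matrix.one_apply, eq_comm]
  · refine Finset.prod_congr rfl fun q hq => ?_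
    rw [Function.update_of_ne (Finset.ne_of_mem_erase hq)]

lemma delta_prod' {k N : ℕ} (a x : Fin k → Fin N) :
    (∏ q, (1 : Matrix (Fin N) (Fin N) ℂ) (x q) (a q)) = if x = a then 1 else 0 := by
  rw [← delta_prod]
  simp only [Matrix.one_apply, eq_comm]

lemma delta_erase' {k N : ℕ} (s : Fin k) (a x : Fin k → Fin N) (i : Fin N) :
    (∏ q ∈ Finset.univ.erase s, (1 : Matrix (Fin N) (Fin N) ℂ) (x q) (a q)) *
      (if x s = i then 1 else 0) = if x = Function.update a s i then 1 else 0 := by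
  rw [← delta_erase]
  simp only [Matrix.one_apply, eq_comm]

lemma deriv_glAct (i j : Fin N) (γ : ℂ → GL (Fin N) ℂ) (h0 : γ 0 = 1)
    (h1 : ∀ x y, HasDerivAt (fun τ => (γ τ : Matrix (Fin N) (Fin N) ℂ) x y)
      (-((if x = j then 1 else 0) * (if y = i then 1 else 0))) 0)
    (h2 : ∀ x y, HasDerivAt (fun τ => (((γ τ)⁻¹ : GL (Fin N) ℂ) : Matrix (Fin N) (Fin N) ℂ) x y)
      ((if y = i then 1 else 0) * (if x = j then 1 else 0)) 0)
    (t : Tens N m n) : HasDerivAt (fun τ => glAct N m n (γ τ) t) (Eact N m n i j t) 0 := by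
  refine hasDerivAt_pi.2 fun a => hasDerivAt_pi.2 fun b => ?_
  have hP : ∀ x : Fin m → Fin N, HasDerivAt
      (fun τ => ∏ q, (γ τ : Matrix (Fin N) (Fin N) ℂ) (a q) (x q))
      (∑ s, -((if a s = j then 1 else 0) * if x = Function.update a s i then 1 else 0)) 0 := by
    intro x
    refine (HasDerivAt.fun_finsetProd (u := Finset.univ) (x := (0 : ℂ))
      (fun q _ => h1 (a q) (x q))).congr_deriv ?_
    refine Finset.sum_congr rfl fun s _ => ?_
    rw [← delta_erase, h0]
    simp only [smul_eq_mul, Units.val_one]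
    ring
  have hQ : ∀ y : Fin n → Fin N, HasDerivAt
      (fun τ => ∏ q, (((γ τ)⁻¹ : GL (Fin N) ℂ) : Matrix (Fin N) (Fin N) ℂ) (y q) (b q))
      (∑ s, ((if b s = i then 1 else 0) * if y = Function.update b s j then 1 else 0)) 0 := by
    intro y
    refine (HasDerivAt.fun_finsetProd (u := Finset.univ) (x := (0 : ℂ))
      (fun q _ => h2 (y q) (b q))).congr_deriv ?_
    refine Finset.sum_congr rfl fun s _ => ?_
    rw [← delta_erase', h0]
    simp only [smul_eq_mul, Units.val_one, inv_one]
    ring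
  have := HasDerivAt.fun_sum (u := Finset.univ) fun (x : Fin m → Fin N) _ =>
    HasDerivAt.fun_sum (u := Finset.univ) fun (y : Fin n → Fin N) _ =>
      (((hP x).mul (hQ y)).mul_const (t x y))
  refine HasDerivAt.congr_deriv this ?_
  simp only [h0, inv_one, Units.val_one, delta_prod, delta_prod']
  simp only [add_mul, Finset.sum_add_distrib, Eact, LinearMap.add_apply, LinearMap.sum_apply,
    Pi.add_apply, Finset.sum_apply]
  congr 1
  · calc _ = ∑ x, (∑ s, -((if a s = j then 1 else 0) *
          if x = Function.update a s i then 1 else 0)) * t x b := by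
          refine Finset.sum_congr rfl fun x _ => ?_
          rw [Finset.sum_eq_single b]
          · simp
          · intro y _ hy; simp [hy, Ne.symm hy]
          · simp
      _ = ∑ s, ∑ x, -((if a s = j then 1 else 0) *
          if x = Function.update a s i then 1 else 0) * t x b := by
          rw [Finset.sum_comm]
          exact Finset.sum_congr rfl fun x _ => Finset.sum_mul _ _ _
      _ = _ := by
          refine Finset.sum_congr rfl fun s _ => ?_
          rw [Finset.sum_eq_single (Function.update a s i)]
          · by_cases h : a s = j <;> simp [h, EactU]
          · intro x _ hx; simp [hx, Ne.symm hx]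
          · simp
  · calc _ = ∑ y, (∑ s, ((if b s = i then 1 else 0) *
          if y = Function.update b s j then 1 else 0)) * t a y := by
          rw [Finset.sum_comm]
          refine Finset.sum_congr rfl fun y _ => ?_
          rw [Finset.sum_eq_single a]
          · simp
          · intro x _ hx; simp [hx, Ne.symm hx]
          · simp
      _ = ∑ s, ∑ y, ((if b s = i then 1 else 0) *
          if y = Function.update b s j then 1 else 0) * t a y := by
          rw [Finset.sum_comm]
          exact Finset.sum_congr rfl fun x _ => Finset.sum_mul _ _ _
      _ = _ := by
          refine Finset.sum_congr rfl fun s _ => ?_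
          rw [Finset.sum_eq_single (Function.update b s j)]
          · by_cases h : b s = i <;> simp [h, EactD]
          · intro x _ hx; simp [hx, Ne.symm hx]
          · simp

lemma cent_comm_E (f : Module.End ℂ (Tens N m n)) (hf : f ∈ Cent N m n) (i j : Fin N) :
    Commute (Eact N m n i j) f := by
  rw [Cent, Subalgebra.mem_centralizer_iff] at hf
  obtain ⟨γ, h0, h1, h2⟩ := exists_curve N i j
  refine LinearMap.ext fun t => ?_
  have e1 := deriv_glAct N m n i j γ h0 h1 h2 (f t)
  have e2 := (LinearMap.toContinuousLinearMap f).hasFDerivAt.comp_hasDerivAt (0 : ℂ)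
    (deriv_glAct N m n i j γ h0 h1 h2 t)
  refine e1.unique (e2.congr_of_eventuallyEq (Filter.Eventually.of_forall fun τ => ?_))
  exact LinearMap.congr_fun (hf _ ⟨γ τ, rfl⟩) t

lemma cent_comm (f : Module.End ℂ (Tens N m n)) (hf : f ∈ Cent N m n) :
    Commute (casimir N m n) f := by
  have h := cent_comm_E N m n f hf
  refine Commute.smul_left (Commute.add_left ?_ (Commute.smul_left ?_ _)) _
  · exact Commute.sum_left _ _ _ fun i _ => Commute.sum_left _ _ _ fun j _ =>
      (h i j).mul_left (h j i)
  · exact Commute.sum_left _ _ _ fun i _ => h i i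

end Mixed

/-- 𝒞_{m,n} = ℒ_m + ℛ_n − 𝒜_{m,n} + N·n coincides with the action
of the Casimir element (1/2)(Eⁱ_j Eʲ_i + N Eⁱ_i) of U(𝔤𝔩_N) on V^{m,n}; in
particular it lies in the centre of the centraliser algebra C_{m,n}(N). -/
theorem casimir_eq_C (N m n : ℕ) (hm : 1 ≤ m) (hn : 1 ≤ n) :
    Mixed.casimir N m n =
      Mixed.LOp N m n + Mixed.ROp N m n - Mixed.A N m n
        + ((N * n : ℕ) : ℂ) • (1 : Module.End ℂ (Tens N m n)) ∧
    Mixed.casimir N m n ∈ Mixed.Cent N m n ∧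
    ∀ f ∈ Mixed.Cent N m n,
      Mixed.casimir N m n * f = f * Mixed.casimir N m n := by
  exact ⟨Mixed.formula N m n, Mixed.mem_cent N m n, Mixed.cent_comm N m n⟩
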